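/- Let g : ℝ → ℝ be smooth and f(x) = g(x²). Then for any x_0, ..., x_n ∈ ℝ: f[x_0, ..., x_n] = ∑_I (∏_{{i-1,i} ⊆ I} (x_{i-1} + x_i)) · g[x_I²], where the sum is over all ordered index sets I = {0 = i_0 < i_1 < ⋯ < i_k = n} with consecutive gaps i_j − i_{j-1} ≤ 2, the product is over pairs of consecutive integers both contained in I, and g[x_I²] denotes g[x_{i_0}², ..., x_{i_k}²]. -/

import Mathlib

open MeasureTheory

/-- The divided difference `f[x₀,…,xₙ]`, defined for `Cⁿ` functions (and
arbitrary, possibly coinciding, points) via Hermite's integral representation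
`f[x₀,…,xₙ] = ∫_{Δₙ} f⁽ⁿ⁾(s₀x₀ + ⋯ + sₙxₙ) dⁿs`; it agrees with the usual
recursive definition on distinct points and extends it continuously. -/
noncomputable def divDiff {E : Type*} [NormedAddCommGroup E] [NormedSpace ℝ E]
    (f : ℝ → E) (n : ℕ) (x : Fin (n + 1) → ℝ) : E :=
  ∫ s in {s : Fin n → ℝ | (∀ i, 0 ≤ s i) ∧ ∑ i, s i ≤ 1},
    iteratedDeriv n f ((1 - ∑ i, s i) * x 0 + ∑ i : Fin n, s i * x i.succ)

lemma simplexSet_closed (n : ℕ) :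
    IsClosed {s : Fin n → ℝ | (∀ i, 0 ≤ s i) ∧ ∑ i, s i ≤ 1} := by
  simp only [Set.ofPred_and, Set.ofPred_forall]
  refine IsClosed.inter (isClosed_iInter fun i => ?_) ?_
  · exact isClosed_le continuous_const (continuous_apply i)
  · exact isClosed_le (by fun_prop) continuous_const

lemma le_one_of_simplex {n : ℕ} {s : Fin n → ℝ} (h0 : ∀ i, 0 ≤ s i) (h1 : ∑ i, s i ≤ 1)
    (i : Fin n) : s i ≤ 1 :=
  (Finset.single_le_sum (fun j _ => h0 j) (Finset.mem_univ i)).trans h1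

lemma simplexSet_compact (n : ℕ) :
    IsCompact {s : Fin n → ℝ | (∀ i, 0 ≤ s i) ∧ ∑ i, s i ≤ 1} := by
  refine (isCompact_Icc (a := (0 : Fin n → ℝ)) (b := 1)).of_isClosed_subset
    (simplexSet_closed n) ?_
  rintro s ⟨h0, h1⟩
  exact ⟨fun i => h0 i, fun i => le_one_of_simplex h0 h1 i⟩

lemma divDiff_integrable {n : ℕ} {f : ℝ → ℝ} (hf : ContDiff ℝ (⊤ : ℕ∞) f)
    (x : Fin (n + 1) → ℝ) :
    IntegrableOn (fun s : Fin n → ℝ =>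
      iteratedDeriv n f ((1 - ∑ i, s i) * x 0 + ∑ i : Fin n, s i * x i.succ))
      {s : Fin n → ℝ | (∀ i, 0 ≤ s i) ∧ ∑ i, s i ≤ 1} := by
  refine ContinuousOn.integrableOn_compact (simplexSet_compact n) (Continuous.continuousOn ?_)
  have : Continuous (iteratedDeriv n f) :=
    hf.continuous_iteratedDeriv n (by exact_mod_cast le_top)
  fun_prop

lemma divDiff_lin {n : ℕ} {f h : ℝ → ℝ} (hf : ContDiff ℝ (⊤ : ℕ∞) f)
    (hh : ContDiff ℝ (⊤ : ℕ∞) h) (c : ℝ) (x : Fin (n + 1) → ℝ) :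
    divDiff (fun u => c * f u + h u) n x = c * divDiff f n x + divDiff h n x := by
  have hle : ((n : ℕ∞) : WithTop ℕ∞) ≤ ((⊤ : ℕ∞) : WithTop ℕ∞) := by exact_mod_cast le_top
  unfold divDiff
  rw [← integral_const_mul, ← integral_add ((divDiff_integrable hf x).const_mul c)
    (divDiff_integrable hh x)]
  congr 1
  funext s
  rw [iteratedDeriv_fun_add, iteratedDeriv_const_mul_field]
  · exact ((contDiff_const.mul hf).of_le hle).contDiffAt
  · exact (hh.of_le hle).contDiffAt

lemma divDiff_zero (f : ℝ → ℝ) (x : Fin 1 → ℝ) : divDiff f 0 x = f (x 0) := by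
  simp [divDiff, Measure.real, volume_pi, Measure.pi_of_empty]

/-- The integral form of a first divided difference. -/
noncomputable def sl (f : ℝ → ℝ) (a u : ℝ) : ℝ :=
  ∫ t in (0 : ℝ)..1, deriv f (a + t * (u - a))

lemma hasDerivAt_par {φ : ℝ → ℝ} (hφ : ContDiff ℝ (⊤ : ℕ∞) φ) (k : ℕ) (a u : ℝ) :
    HasDerivAt (fun u => ∫ t in (0 : ℝ)..1, t ^ k * φ (a + t * (u - a)))
      (∫ t in (0 : ℝ)..1, t ^ (k + 1) * deriv φ (a + t * (u - a))) u := by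
  have hc : Continuous φ := hφ.continuous
  have hd : Continuous (deriv φ) := hφ.continuous_deriv (by simp)
  have hcont : Continuous (fun p : ℝ × ℝ => p.2 ^ (k + 1) * deriv φ (a + p.2 * (p.1 - a))) := by
    fun_prop
  obtain ⟨M, hM⟩ := ((isCompact_Icc (a := u - 1) (b := u + 1)).prod
    (isCompact_Icc (a := (0 : ℝ)) (b := 1))).exists_bound_of_continuousOn hcont.continuousOn
  refine (intervalIntegral.hasDerivAt_integral_of_dominated_loc_of_deriv_le
    (F := fun u t => t ^ k * φ (a + t * (u - a)))
    (F' := fun u t => t ^ (k + 1) * deriv φ (a + t * (u - a)))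
    (s := Set.Icc (u - 1) (u + 1)) (bound := fun _ => M)
    (Icc_mem_nhds (by linarith) (by linarith)) ?_ ?_ ?_ ?_ ?_ ?_).2
  · refine Filter.Eventually.of_forall fun v => Continuous.aestronglyMeasurable ?_
    fun_prop
  · apply Continuous.intervalIntegrable
    fun_prop
  · apply Continuous.aestronglyMeasurable
    fun_prop
  · refine Filter.Eventually.of_forall fun t ht v hv => ?_
    rw [Set.uIoc_of_le zero_le_one] at ht
    exact hM (v, t) ⟨hv, ht.1.le, ht.2⟩
  · exact intervalIntegrable_const
  · refine Filter.Eventually.of_forall fun t ht v hv => ?_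
    have h1 : HasDerivAt (fun v => a + t * (v - a)) t v := by
      simpa using (((hasDerivAt_id v).sub_const a).const_mul t).const_add a
    have h2 := (hφ.differentiable (by simp) (a + t * (v - a))).hasDerivAt.comp v h1
    exact (h2.const_mul (t ^ k)).congr_deriv (by ring)

lemma contDiff_iter {f : ℝ → ℝ} (hf : ContDiff ℝ (⊤ : ℕ∞) f) (n : ℕ) :
    ContDiff ℝ (⊤ : ℕ∞) (iteratedDeriv n f) := by
  induction n generalizing f with
  | zero => simpa using hf
  | succ n ih =>
    rw [iteratedDeriv_succ']
    exact ih (contDiff_infty_iff_deriv.1 hf).2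

lemma iteratedDeriv_sl {f : ℝ → ℝ} (hf : ContDiff ℝ (⊤ : ℕ∞) f) (a : ℝ) (n : ℕ) :
    iteratedDeriv n (sl f a) = fun u =>
      ∫ t in (0 : ℝ)..1, t ^ n * iteratedDeriv (n + 1) f (a + t * (u - a)) := by
  induction n with
  | zero => funext u; simp [sl]
  | succ n ih =>
    rw [iteratedDeriv_succ, ih]
    funext u
    rw [(hasDerivAt_par (contDiff_iter hf (n + 1)) n a u).deriv, ← iteratedDeriv_succ]

lemma contDiff_sl {f : ℝ → ℝ} (hf : ContDiff ℝ (⊤ : ℕ∞) f) (a : ℝ) :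
    ContDiff ℝ (⊤ : ℕ∞) (sl f a) := by
  refine contDiff_of_differentiable_iteratedDeriv fun m _ => ?_
  rw [iteratedDeriv_sl hf]
  exact fun u => (hasDerivAt_par (contDiff_iter hf (m + 1)) m a u).differentiableAt

lemma sl_self (f : ℝ → ℝ) (a : ℝ) : sl f a a = deriv f a := by simp [sl]

lemma sl_ne {f : ℝ → ℝ} (hf : ContDiff ℝ (⊤ : ℕ∞) f) {a u : ℝ} (h : u ≠ a) :
    sl f a u = (f u - f a) / (u - a) := by
  have h' : u - a ≠ 0 := sub_ne_zero.2 h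
  have h1 : sl f a u = ∫ t in (0 : ℝ)..1, deriv f ((u - a) * t + a) := by
    unfold sl; congr 1; funext t; congr 1; ring
  rw [h1, intervalIntegral.integral_comp_mul_add _ h',
    intervalIntegral.integral_deriv_eq_sub' f rfl
      (fun x _ => hf.differentiable (by simp) x)
      (hf.continuous_deriv (by simp)).continuousOn]
  simp only [smul_eq_mul, mul_one, mul_zero, zero_add, sub_add_cancel]
  field_simp

lemma sl_sq {g : ℝ → ℝ} (hg : ContDiff ℝ (⊤ : ℕ∞) g) (a u : ℝ) :
    sl (fun u => g (u ^ 2)) a u = (a + u) * sl g (a ^ 2) (u ^ 2) := by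
  have hf : ContDiff ℝ (⊤ : ℕ∞) (fun u : ℝ => g (u ^ 2)) := hg.comp (contDiff_id.pow 2)
  by_cases h : u = a
  · subst h
    rw [sl_self, sl_self]
    have h1 : HasDerivAt (fun v : ℝ => v ^ 2) (2 * u) u := by simpa using hasDerivAt_pow 2 u
    have := ((hg.differentiable (by simp) (u ^ 2)).hasDerivAt.comp u h1).deriv
    rw [show (fun u => g (u ^ 2)) = g ∘ (fun v : ℝ => v ^ 2) from rfl, this]
    ring
  · rw [sl_ne hf h]
    by_cases h2 : u ^ 2 = a ^ 2
    · have h3 : a + u = 0 := by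
        have : (u - a) * (a + u) = 0 := by linear_combination h2
        exact (mul_eq_zero.1 this).resolve_left (sub_ne_zero.2 h)
      rw [h3, h2]; simp
    · rw [sl_ne hg h2]
      have e1 := sub_ne_zero.2 h
      have e2 := sub_ne_zero.2 h2
      field_simp
      ring

lemma sl_linmul {F : ℝ → ℝ} (hF : ContDiff ℝ (⊤ : ℕ∞) F) (c a u : ℝ) :
    sl (fun u => (c + u) * F u) a u = (c + a) * sl F a u + F u := by
  have hf : ContDiff ℝ (⊤ : ℕ∞) (fun u : ℝ => (c + u) * F u) :=
    (contDiff_const.add contDiff_id).mul hF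
  by_cases h : u = a
  · subst h
    rw [sl_self, sl_self]
    have h1 : HasDerivAt (fun v : ℝ => c + v) 1 u := (hasDerivAt_id u).const_add c
    have := (h1.mul (hF.differentiable (by simp) u).hasDerivAt).deriv
    rw [show (fun u => (c + u) * F u) = (fun v : ℝ => c + v) * F from rfl, this]
    ring
  · rw [sl_ne hf h, sl_ne hF h]
    have e1 := sub_ne_zero.2 h
    field_simp
    ring

lemma simplex_integral (n : ℕ) {F : ℝ → ℝ} (hF : Continuous F) (x : Fin (n + 2) → ℝ) :
    ∫ s in {s : Fin (n + 1) → ℝ | (∀ i, 0 ≤ s i) ∧ ∑ i, s i ≤ 1},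
      F ((1 - ∑ i, s i) * x 0 + ∑ i : Fin (n + 1), s i * x i.succ) =
    ∫ s in {s : Fin n → ℝ | (∀ i, 0 ≤ s i) ∧ ∑ i, s i ≤ 1},
      ∫ t in (0 : ℝ)..1, t ^ n * F (x 0 + t *
        (((1 - ∑ i, s i) * x 1 + ∑ i : Fin n, s i * x i.succ.succ) - x 0)) := by
  classical
  set A : Set ((Fin n → ℝ) × ℝ) := {p | (∀ i, 0 ≤ p.1 i) ∧ ∑ i, p.1 i ≤ p.2 ∧ p.2 ≤ 1} with hA
  set B : Set (ℝ × (Fin n → ℝ)) :=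
    {p | 0 ≤ p.1 ∧ (∀ i, 0 ≤ p.2 i) ∧ p.1 + ∑ i, p.2 i ≤ 1} with hB
  set D : Set (Fin n → ℝ) := {s : Fin n → ℝ | (∀ i, 0 ≤ s i) ∧ ∑ i, s i ≤ 1} with hD
  set H : (Fin n → ℝ) × ℝ → ℝ := fun p =>
    F ((1 - p.2) * x 0 + ((p.2 - ∑ i, p.1 i) * x 1 + ∑ i : Fin n, p.1 i * x i.succ.succ)) with hH
  set J : (Fin n → ℝ) × ℝ → ℝ := fun p =>
    p.2 ^ n * F (x 0 + p.2 *
        (((1 - ∑ i, p.1 i) * x 1 + ∑ i : Fin n, p.1 i * x i.succ.succ) - x 0)) with hJ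
  set C : Set ((Fin n → ℝ) × ℝ) := D ×ˢ Set.Icc 0 1 with hC
  have hHc : Continuous H := by fun_prop
  have hJc : Continuous J := by fun_prop
  have hAclosed : IsClosed A := by
    simp only [hA, Set.ofPred_and, Set.ofPred_forall]
    refine IsClosed.inter (isClosed_iInter fun i => ?_) (IsClosed.inter ?_ ?_)
    all_goals exact isClosed_le (by fun_prop) (by fun_prop)
  have hAcomp : IsCompact A := by
    refine ((isCompact_Icc (a := (0 : Fin n → ℝ)) (b := 1)).prod
      (isCompact_Icc (a := (0 : ℝ)) (b := 1))).of_isClosed_subset hAclosed ?_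
    rintro ⟨s, t⟩ ⟨h0, h1, h2⟩
    dsimp only at h0 h1 h2
    exact ⟨⟨fun i => h0 i, fun i => le_one_of_simplex h0 (h1.trans h2) i⟩,
      (Finset.sum_nonneg fun i _ => h0 i).trans h1, h2⟩
  have hBclosed : IsClosed B := by
    simp only [hB, Set.ofPred_and, Set.ofPred_forall]
    refine IsClosed.inter ?_ (IsClosed.inter (isClosed_iInter fun i => ?_) ?_)
    all_goals exact isClosed_le (by fun_prop) (by fun_prop)
  have hBcomp : IsCompact B := by
    refine ((isCompact_Icc (a := (0 : ℝ)) (b := 1)).prod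
      (isCompact_Icc (a := (0 : Fin n → ℝ)) (b := 1))).of_isClosed_subset hBclosed ?_
    rintro ⟨t, s⟩ ⟨h0, h1, h2⟩
    dsimp only at h0 h1 h2
    have := Finset.sum_nonneg fun i (_ : i ∈ Finset.univ) => h1 i
    exact ⟨⟨h0, by dsimp only; linarith⟩,
      ⟨fun i => h1 i, fun i => le_one_of_simplex h1 (by linarith) i⟩⟩
  have hCcomp : IsCompact C := (simplexSet_compact n).prod isCompact_Icc
  have hAint : Integrable (A.indicator H) (volume.prod volume) :=
    (hHc.continuousOn.integrableOn_compact hAcomp).integrable_indicator hAclosed.measurableSet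
  have hCint : Integrable (C.indicator J) (volume.prod volume) :=
    (hJc.continuousOn.integrableOn_compact hCcomp).integrable_indicator
      hCcomp.isClosed.measurableSet
  set K : ℝ × (Fin n → ℝ) → ℝ := fun p => A.indicator H (p.2, p.1 + ∑ i, p.2 i) with hK
  have hKB : K = B.indicator (fun p => H (p.2, p.1 + ∑ i, p.2 i)) := by
    funext p
    simp only [hK, Set.indicator, hA, hB, Set.mem_ofPred_eq]
    refine if_congr ?_ rfl rfl
    constructor
    · rintro ⟨h1, h2, h3⟩
      exact ⟨by linarith, h1, h3⟩
    · rintro ⟨h1, h2, h3⟩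
      exact ⟨h2, by linarith, h3⟩
  have hKint : Integrable K (volume.prod volume) := by
    rw [hKB]
    refine (ContinuousOn.integrableOn_compact hBcomp
      (Continuous.continuousOn ?_)).integrable_indicator hBclosed.measurableSet
    fun_prop
  have step1 : ∫ s in {s : Fin (n + 1) → ℝ | (∀ i, 0 ≤ s i) ∧ ∑ i, s i ≤ 1},
      F ((1 - ∑ i, s i) * x 0 + ∑ i : Fin (n + 1), s i * x i.succ) =
      ∫ p, K p ∂(volume.prod volume) := by
    rw [← integral_indicator (simplexSet_closed (n + 1)).measurableSet]
    rw [← Measure.volume_eq_prod,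
      ← (volume_preserving_piFinSuccAbove (fun _ : Fin (n + 1) => ℝ) 0).integral_comp' K]
    congr 1
    funext s
    rw [hKB]
    simp only [Set.indicator, hB, Set.mem_ofPred_eq, Fin.sum_univ_succ, Fin.forall_fin_succ,
      MeasurableEquiv.piFinSuccAbove_apply, Fin.insertNthEquiv_symm_apply, hH, Fin.removeNth,
      Fin.zero_succAbove, and_assoc, Fin.succ_zero_eq_one]
    refine if_congr Iff.rfl ?_ rfl
    congr 2
    ring
  rw [step1, integral_prod_symm _ hKint]
  have step2 : ∀ s : Fin n → ℝ, ∫ r, K (r, s) = ∫ t, A.indicator H (s, t) := fun s =>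
    integral_add_right_eq_self (fun t => A.indicator H (s, t)) (∑ i, s i)
  simp_rw [step2]
  rw [integral_integral_swap (f := fun s t => A.indicator H (s, t)) hAint]
  have step3 : ∀ᵐ t : ℝ, ∫ s, A.indicator H (s, t) = ∫ s, C.indicator J (s, t) := by
    have h0 : ∀ᵐ t : ℝ, t ≠ 0 := by simp [ae_iff]
    filter_upwards [h0] with t ht
    rcases lt_or_gt_of_ne ht with ht | ht
    · congr 1
      funext s
      rw [Set.indicator_of_notMem, Set.indicator_of_notMem]
      · rintro ⟨_, h, _⟩
        exact absurd h (not_le.2 ht)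
      · rintro ⟨h0, h1, _⟩
        dsimp only at h0 h1
        have := Finset.sum_nonneg fun i (_ : i ∈ Finset.univ) => h0 i
        linarith
    · have hs := Measure.integral_comp_smul (volume : Measure (Fin n → ℝ))
        (fun s => A.indicator H (s, t)) t
      have htn : 0 < t ^ n := pow_pos ht n
      rw [Module.finrank_fin_fun, abs_of_pos (inv_pos.2 htn), smul_eq_mul] at hs
      have hs' : ∫ s, A.indicator H (s, t) = t ^ n * ∫ s, A.indicator H (t • s, t) := by
        rw [hs]; field_simp
      rw [hs', ← integral_const_mul]
      congr 1
      funext s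
      have hiff : (t • s, t) ∈ A ↔ (s, t) ∈ C := by
        simp only [hA, hC, hD, Set.mem_ofPred_eq, Set.mem_prod, Set.mem_Icc, Pi.smul_apply,
          smul_eq_mul, ← Finset.mul_sum, mul_nonneg_iff_of_pos_left ht]
        have : t * ∑ i, s i ≤ t ↔ ∑ i, s i ≤ 1 := by
          constructor
          · intro h
            by_contra! h'
            nlinarith
          · intro h
            nlinarith
        rw [this]
        have := ht.le
        tauto
      by_cases hm : (s, t) ∈ C
      · rw [Set.indicator_of_mem (hiff.2 hm), Set.indicator_of_mem hm]
        simp only [hH, hJ, Pi.smul_apply, smul_eq_mul, mul_assoc, ← Finset.mul_sum]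
        congr 2
        ring
      · rw [Set.indicator_of_notMem (fun h => hm (hiff.1 h)), Set.indicator_of_notMem hm]
        simp
  rw [integral_congr_ae step3,
    ← integral_integral_swap (f := fun s t => C.indicator J (s, t)) hCint,
    ← integral_indicator (simplexSet_closed n).measurableSet]
  congr 1
  funext s
  by_cases hs : s ∈ D
  · rw [Set.indicator_of_mem hs, intervalIntegral.integral_of_le zero_le_one,
      ← integral_Icc_eq_integral_Ioc, ← integral_indicator measurableSet_Icc]
    congr 1
    funext t
    simp only [Set.indicator, hC, Set.mem_prod, hs, true_and, hJ]
  · rw [Set.indicator_of_notMem hs]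
    simp [Set.indicator, hC, hs]

lemma divDiff_succ {f : ℝ → ℝ} (hf : ContDiff ℝ (⊤ : ℕ∞) f) (n : ℕ) (x : Fin (n + 2) → ℝ) :
    divDiff f (n + 1) x = divDiff (sl f (x 0)) n (fun j => x j.succ) := by
  unfold divDiff
  rw [simplex_integral n (contDiff_iter hf (n + 1)).continuous x, iteratedDeriv_sl hf]
  rfl

lemma divDiff_linmul {F : ℝ → ℝ} (hF : ContDiff ℝ (⊤ : ℕ∞) F) (c : ℝ) (m : ℕ)
    (y : Fin (m + 2) → ℝ) :
    divDiff (fun u => (c + u) * F u) (m + 1) y =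
      (c + y 0) * divDiff F (m + 1) y + divDiff F m (fun j => y j.succ) := by
  have hf : ContDiff ℝ (⊤ : ℕ∞) (fun u : ℝ => (c + u) * F u) :=
    (contDiff_const.add contDiff_id).mul hF
  rw [divDiff_succ hf, divDiff_succ hF, ← divDiff_lin (contDiff_sl hF _) hF]
  congr 1
  funext u
  exact sl_linmul hF c (y 0) u

/-- Weighted sum over chains of length `k` from `a` to the last index. -/
noncomputable def T {n : ℕ} (x : Fin (n + 1) → ℝ) (k : ℕ) (a : Fin (n + 1)) (g : ℝ → ℝ) : ℝ :=
  ∑ c ∈ Finset.univ.filter (fun c : Fin (k + 1) → Fin (n + 1) =>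
            c 0 = a ∧ c (Fin.last k) = Fin.last n ∧
              ∀ j : Fin k, c j.castSucc < c j.succ ∧
                (c j.succ).val ≤ (c j.castSucc).val + 2),
          (∏ j : Fin k,
              if (c j.succ).val = (c j.castSucc).val + 1 then
                x (c j.castSucc) + x (c j.succ)
              else 1) *
            divDiff g k (fun j => x (c j) ^ 2)

lemma T_zero {n : ℕ} (x : Fin (n + 1) → ℝ) (a : Fin (n + 1)) (g : ℝ → ℝ) :
    T x 0 a g = if a = Fin.last n then g (x a ^ 2) else 0 := by
  unfold T
  rw [Finset.sum_filter, ← (Equiv.funUnique (Fin 1) (Fin (n + 1))).symm.sum_comp]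
  simp only [divDiff_zero]
  rw [Finset.sum_eq_single a]
  · simp
  · intro b _ hb
    simp [hb]
  · simp

lemma T_succ {n : ℕ} (x : Fin (n + 1) → ℝ) (k : ℕ) (a : Fin (n + 1)) {g : ℝ → ℝ}
    (hg : ContDiff ℝ (⊤ : ℕ∞) g) :
    T x (k + 1) a g = ∑ b : Fin (n + 1), if a < b ∧ b.val ≤ a.val + 2 then
      (if b.val = a.val + 1 then x a + x b else 1) * T x k b (sl g (x a ^ 2)) else 0 := by
  unfold T
  rw [Finset.sum_filter, ← (Fin.consEquiv (fun _ : Fin (k + 2) => Fin (n + 1))).sum_comp,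
    Fintype.sum_prod_type, Finset.sum_eq_single a]
  · have hR : ∀ b : Fin (n + 1), (if a < b ∧ b.val ≤ a.val + 2 then
      (if b.val = a.val + 1 then x a + x b else 1) * T x k b (sl g (x a ^ 2)) else 0) =
      ∑ c : Fin (k + 1) → Fin (n + 1), if c 0 = b then
        (if (a < c 0 ∧ (c 0).val ≤ a.val + 2) ∧ c (Fin.last k) = Fin.last n ∧
              ∀ j : Fin k, c j.castSucc < c j.succ ∧
                (c j.succ).val ≤ (c j.castSucc).val + 2 then
          (if (c 0).val = a.val + 1 then x a + x (c 0) else 1) * ((∏ j : Fin k,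
              if (c j.succ).val = (c j.castSucc).val + 1 then
                x (c j.castSucc) + x (c j.succ)
              else 1) *
            divDiff (sl g (x a ^ 2)) k (fun j => x (c j) ^ 2)) else 0) else 0 := by
      intro b
      unfold T
      rw [Finset.sum_filter, Finset.mul_sum]
      by_cases h : a < b ∧ b.val ≤ a.val + 2
      · rw [if_pos h]
        refine Finset.sum_congr rfl fun c _ => ?_
        by_cases hb : c 0 = b
        · subst hb
          simp [h]
        · simp [hb]
      · rw [if_neg h, eq_comm]
        refine Finset.sum_eq_zero fun c _ => ?_
        by_cases hb : c 0 = b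
        · subst hb
          rw [if_pos rfl, if_neg (fun h' => h h'.1)]
        · simp [hb]
    change _ = ∑ b : Fin (n + 1), (if a < b ∧ b.val ≤ a.val + 2 then
      (if b.val = a.val + 1 then x a + x b else 1) * T x k b (sl g (x a ^ 2)) else 0)
    simp_rw [hR]
    rw [Finset.sum_comm]
    refine Finset.sum_congr rfl fun c _ => ?_
    rw [Finset.sum_ite_eq, if_pos (Finset.mem_univ _)]
    simp only [Fin.consEquiv_apply, Fin.prod_univ_succ, Fin.forall_fin_succ, divDiff_succ hg,
      ← Fin.succ_last, ← Fin.succ_castSucc, Fin.cons_succ, Fin.cons_zero, Fin.castSucc_zero,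
      true_and]
    refine if_congr ?_ (by ring) rfl
    tauto
  · intro b _ hb
    refine Finset.sum_eq_zero fun c _ => ?_
    simp [hb]
  · simp

lemma main_aux {n : ℕ} (x : Fin (n + 1) → ℝ) (m : ℕ) : ∀ (K : ℕ), m ≤ K →
    ∀ (a : Fin (n + 1)) (ha : a.val + m = n) (g : ℝ → ℝ), ContDiff ℝ (⊤ : ℕ∞) g →
    divDiff (fun u => g (u ^ 2)) m (fun j => x ⟨a.val + j.val, by omega⟩) =
      ∑ k ∈ Finset.range (K + 1), T x k a g := by
  induction m using Nat.strong_induction_on with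
  | _ m ih =>
  intro K hK a ha g hg
  have hsum : ∀ K', K = K' + 1 → ∑ k ∈ Finset.range (K + 1), T x k a g = 
      (∑ b : Fin (n + 1), if a < b ∧ b.val ≤ a.val + 2 then
      (if b.val = a.val + 1 then x a + x b else 1) *
        ∑ k ∈ Finset.range (K' + 1), T x k b (sl g (x a ^ 2)) else 0) + T x 0 a g := by
    rintro K' rfl
    rw [Finset.sum_range_succ']
    congr 1
    simp_rw [T_succ x _ a hg]
    rw [Finset.sum_comm]
    refine Finset.sum_congr rfl fun b _ => ?_
    by_cases h : a < b ∧ b.val ≤ a.val + 2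
    · simp only [if_pos h, Finset.mul_sum]
    · simp only [if_neg h, Finset.sum_const_zero]
  have hf : ContDiff ℝ (⊤ : ℕ∞) (fun u : ℝ => g (u ^ 2)) := hg.comp (contDiff_id.pow 2)
  have hG := contDiff_sl hg (x a ^ 2)
  have hGf : ContDiff ℝ (⊤ : ℕ∞) (fun u : ℝ => sl g (x a ^ 2) (u ^ 2)) :=
    hG.comp (contDiff_id.pow 2)
  rcases m with _ | m
  · have hal : a = Fin.last n := Fin.ext (by simpa using ha)
    have h0 : T x 0 a g = g (x a ^ 2) := by rw [T_zero, if_pos hal]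
    rw [divDiff_zero]
    rcases K with _ | K
    · simp [h0]
    · rw [hsum K rfl, Finset.sum_eq_zero, h0]
      · simp
      · intro b _
        rw [if_neg]
        rintro ⟨h, -⟩
        rw [hal] at h
        exact absurd h (not_lt.2 (Fin.le_last b))
  · obtain ⟨K, rfl⟩ : ∃ K', K = K' + 1 := ⟨K - 1, by omega⟩
    have hal : a ≠ Fin.last n := by
      rintro rfl
      simp at ha
    rw [hsum K rfl, T_zero, if_neg hal, add_zero, divDiff_succ hf]
    have e : sl (fun u => g (u ^ 2)) (x a) = fun u => (x a + u) * sl g (x a ^ 2) (u ^ 2) :=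
      funext fun u => sl_sq hg (x a) u
    have e0 : (⟨a.val + ((0 : Fin (m + 2)) : ℕ), by omega⟩ : Fin (n + 1)) = a := by simp
    simp only [e0]
    rw [e]
    set b1 : Fin (n + 1) := ⟨a.val + 1, by omega⟩ with hb1
    have i1 := ih m (by omega) K (by omega) b1 (by simp only [hb1]; omega) _ hG
    rcases m with _ | m
    · rw [divDiff_zero] at i1 ⊢
      rw [Finset.sum_eq_single b1]
      · rw [if_pos (by simp [hb1, Fin.lt_def]), if_pos rfl, ← i1]
        simp [hb1]
      · intro b _ hb
        rw [if_neg]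
        rintro ⟨h, -⟩
        apply hb
        ext
        simp only [hb1, Fin.lt_def] at h ⊢
        omega
      · simp
    · set b2 : Fin (n + 1) := ⟨a.val + 2, by omega⟩ with hb2
      have i2 := ih m (by omega) K (by omega) b2 (by simp only [hb2]; omega) _ hG
      have hne : b1 ≠ b2 := by simp [hb1, hb2]
      rw [divDiff_linmul hGf, Finset.sum_eq_add b1 b2 hne]
      · rw [if_pos (by simp [hb1, Fin.lt_def]), if_pos rfl,
          if_pos (by simp [hb2, Fin.lt_def]), if_neg (by simp [hb2]), ← i1, ← i2, one_mul]
        congr 2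
        · congr 1
          funext j
          congr 1
          ext
          simp [hb1]
          omega
        · funext j
          congr 1
          ext
          simp [hb2]
          omega
      · rintro b _ ⟨hb, hb'⟩
        rw [if_neg]
        rintro ⟨h, h'⟩
        have h3 : b.val ≠ a.val + 1 := fun h => hb (Fin.ext h)
        have h4 : b.val ≠ a.val + 2 := fun h => hb' (Fin.ext h)
        rw [Fin.lt_def] at h
        omega
      · simp
      · simp

/-- For `f(x) = g(x²)`:
`f[x₀,…,xₙ] = ∑_I (∏_{{i-1,i} ⊆ I} (x_{i-1} + x_i)) g[x_I²]`, the sum being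
over all chains `I = {0 = i₀ < i₁ < ⋯ < i_k = n}` with consecutive gaps at
most `2`, and the product over pairs of consecutive integers contained in `I`. -/
theorem divDiff_g_of_sq (n : ℕ) (g : ℝ → ℝ) (hg : ContDiff ℝ (⊤ : ℕ∞) g)
    (x : Fin (n + 1) → ℝ) :
    divDiff (fun u : ℝ => g (u ^ 2)) n x =
      ∑ k ∈ Finset.range (n + 1),
        ∑ c ∈ Finset.univ.filter (fun c : Fin (k + 1) → Fin (n + 1) =>
            c 0 = 0 ∧ c (Fin.last k) = Fin.last n ∧
              ∀ j : Fin k, c j.castSucc < c j.succ ∧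
                (c j.succ).val ≤ (c j.castSucc).val + 2),
          (∏ j : Fin k,
              if (c j.succ).val = (c j.castSucc).val + 1 then
                x (c j.castSucc) + x (c j.succ)
              else 1) *
            divDiff g k (fun j => x (c j) ^ 2) := by
  have h := main_aux x n n le_rfl 0 (by simp) g hg
  unfold T at h
  rw [← h]
  congr 1
  funext j
  congr 1
  ext
  simp
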